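/- arXiv:2405.15510 — 2 statements merged into one kernel-verified Lean document; each statement's English description precedes it below -/
import Mathlib

section
/- Let Λ = U ⊕ U ⊕ E₈ ⊕ E₈ ⊕ [−2] ⊕ [−2], where U is the hyperbolic plane, E₈ is the negative definite E₈ root lattice, and [−2] is the rank one lattice generated by a vector of square −2. Then the discriminant group D_Λ = Λ^∨/Λ is isomorphic to (ℤ/2ℤ)², the orthogonal group O(D_Λ) of the induced finite quadratic form on D_Λ has order 2, and consequently the stable subgroup Õ(Λ) = O⁺(Λ) ∩ O^#(Λ) has index 2 in O⁺(Λ). -/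
/-- Gram matrix of the negative definite `E₈` root lattice. -/
def E8M : Matrix (Fin 8) (Fin 8) ℤ :=
  !![-2, 0, 1, 0, 0, 0, 0, 0;
      0, -2, 0, 1, 0, 0, 0, 0;
      1, 0, -2, 1, 0, 0, 0, 0;
      0, 1, 1, -2, 1, 0, 0, 0;
      0, 0, 0, 1, -2, 1, 0, 0;
      0, 0, 0, 0, 1, -2, 1, 0;
      0, 0, 0, 0, 0, 1, -2, 1;
      0, 0, 0, 0, 0, 0, 1, -2]

/-- Index type for `Λ = U^{⊕2} ⊕ E₈^{⊕2} ⊕ [-2]^{⊕2}`, of rank 22. -/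
abbrev JΛ : Type := (Fin 2 × Fin 2) ⊕ ((Fin 2 × Fin 8) ⊕ Fin 2)

/-- Gram matrix of `Λ = U^{⊕2} ⊕ E₈^{⊕2} ⊕ [-2]^{⊕2}`. -/
def gΛ : JΛ → JΛ → ℤ
  | Sum.inl (a, i), Sum.inl (b, j) => if a = b ∧ i ≠ j then 1 else 0
  | Sum.inr (Sum.inl (a, i)), Sum.inr (Sum.inl (b, j)) => if a = b then E8M i j else 0
  | Sum.inr (Sum.inr a), Sum.inr (Sum.inr b) => if a = b then -2 else 0
  | _, _ => 0

/-- The bilinear form of `Λ` extended to `V = Λ ⊗ ℚ`. -/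
def bfQ (x y : JΛ → ℚ) : ℚ := ∑ i : JΛ, ∑ j : JΛ, x i * (gΛ i j : ℚ) * y j

/-- The lattice `Λ` inside `V`, as the integral points. -/
def LΛ : Submodule ℤ (JΛ → ℚ) :=
  LinearMap.range (LinearMap.pi fun i =>
    ((Int.castAddHom ℚ).toIntLinearMap.comp (LinearMap.proj i) :
      (JΛ → ℤ) →ₗ[ℤ] ℚ))

/-- The dual lattice `Λ^∨ ⊆ Λ ⊗ ℚ`. -/
def DualΛ : Submodule ℤ (JΛ → ℚ) where
  carrier := {x | ∀ l ∈ LΛ, ∃ n : ℤ, bfQ x l = (n : ℚ)}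
  add_mem' := by
    intro x y hx hy l hl
    obtain ⟨a, ha⟩ := hx l hl
    obtain ⟨b, hb⟩ := hy l hl
    refine ⟨a + b, ?_⟩
    have : bfQ (x + y) l = bfQ x l + bfQ y l := by
      simp [bfQ, Pi.add_apply, add_mul, Finset.sum_add_distrib]
    rw [this, ha, hb]; push_cast; ring
  zero_mem' := by
    intro l hl
    exact ⟨0, by simp [bfQ]⟩
  smul_mem' := by
    intro c x hx l hl
    obtain ⟨n, hn⟩ := hx l hl
    refine ⟨c * n, ?_⟩
    have : bfQ (c • x) l = (c : ℚ) * bfQ x l := by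
      simp [bfQ, Pi.smul_apply, zsmul_eq_mul, Finset.mul_sum, mul_add, mul_assoc]
    rw [this, hn]; push_cast; ring

/-- The discriminant group `D_Λ = Λ^∨/Λ`. -/
abbrev DiscΛ : Type := DualΛ ⧸ (Submodule.comap DualΛ.subtype LΛ)

/-- `f` belongs to `O(Λ)`. -/
def IsIsomΛ (f : (JΛ → ℚ) ≃ₗ[ℚ] (JΛ → ℚ)) : Prop :=
  (∀ x y, bfQ (f x) (f y) = bfQ x y) ∧ (∀ x ∈ LΛ, f x ∈ LΛ) ∧
    ∀ x ∈ LΛ, f.symm x ∈ LΛ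

/-- `f ∈ O⁺(Λ)`: real spinor norm 1, witnessed by a reflection decomposition
along non-isotropic vectors `v_i` with `∏ (-v_i²/2) > 0`. -/
def SpinPosΛ (f : (JΛ → ℚ) ≃ₗ[ℚ] (JΛ → ℚ)) : Prop :=
  ∃ vs : List (JΛ → ℚ), (∀ v ∈ vs, bfQ v v ≠ 0) ∧
    ((vs.map fun v x => x - (2 * bfQ x v / bfQ v v) • v).foldr (· ∘ ·) id = ⇑f) ∧
    0 < ((vs.map fun v => -(bfQ v v) / 2).prod)

/-- `f` is stable: it acts trivially on the discriminant group `D_Λ`. -/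
def StableΛ (f : (JΛ → ℚ) ≃ₗ[ℚ] (JΛ → ℚ)) : Prop :=
  ∀ x : JΛ → ℚ, x ∈ DualΛ → f x - x ∈ LΛ

/-- The inverse of the Gram matrix `E8M`. -/
def E8Inv : Matrix (Fin 8) (Fin 8) ℤ :=
  -!![4, 5, 7, 10, 8, 6, 4, 2;
      5, 8, 10, 15, 12, 9, 6, 3;
      7, 10, 14, 20, 16, 12, 8, 4;
      10, 15, 20, 30, 24, 18, 12, 6;
      8, 12, 16, 24, 20, 15, 10, 5;
      6, 9, 12, 18, 15, 12, 8, 4;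
      4, 6, 8, 12, 10, 8, 6, 3;
      2, 3, 4, 6, 5, 4, 3, 2]

theorem E8M_mul_E8Inv : E8M * E8Inv = 1 := by
  decide

theorem mem_LΛ_iff (x : JΛ → ℚ) : x ∈ LΛ ↔ ∀ i, ∃ n : ℤ, x i = n := by
  constructor
  · rintro ⟨y, rfl⟩ i
    exact ⟨y i, by simp⟩
  · intro h
    choose y hy using h
    exact ⟨y, by ext i; simp [hy]⟩

theorem bfQ_expand (x y : JΛ → ℚ) :
    bfQ x y = ∑ a : Fin 2, (x (.inl (a, 0)) * y (.inl (a, 1)) + x (.inl (a, 1)) * y (.inl (a, 0)))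
      + ∑ a : Fin 2, ∑ j : Fin 8,
          (∑ i : Fin 8, x (.inr (.inl (a, i))) * (E8M i j : ℚ)) * y (.inr (.inl (a, j)))
      - 2 * ∑ a : Fin 2, x (.inr (.inr a)) * y (.inr (.inr a)) := by
  have hE (a : Fin 2) : ∑ j : Fin 8, (∑ i : Fin 8, x (.inr (.inl (a, i))) * (E8M i j : ℚ)) *
      y (.inr (.inl (a, j))) = ∑ i : Fin 8, ∑ j : Fin 8,
        x (.inr (.inl (a, i))) * (E8M i j : ℚ) * y (.inr (.inl (a, j))) := by
    rw [Finset.sum_comm]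
    simp only [Finset.sum_mul]
  simp only [hE]
  simp only [bfQ, Fintype.sum_sum_type, Fintype.sum_prod_type, gΛ, Fin.sum_univ_two]
  simp
  ring

theorem bfQ_self_expand (x : JΛ → ℚ) :
    bfQ x x = 2 * (∑ a : Fin 2, x (.inl (a, 0)) * x (.inl (a, 1))
      + ∑ a : Fin 2, (-∑ i : Fin 8, x (.inr (.inl (a, i))) ^ 2
        + x (.inr (.inl (a, 0))) * x (.inr (.inl (a, 2)))
        + x (.inr (.inl (a, 1))) * x (.inr (.inl (a, 3)))
        + x (.inr (.inl (a, 2))) * x (.inr (.inl (a, 3)))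
        + x (.inr (.inl (a, 3))) * x (.inr (.inl (a, 4)))
        + x (.inr (.inl (a, 4))) * x (.inr (.inl (a, 5)))
        + x (.inr (.inl (a, 5))) * x (.inr (.inl (a, 6)))
        + x (.inr (.inl (a, 6))) * x (.inr (.inl (a, 7)))))
      - 2 * ∑ a : Fin 2, x (.inr (.inr a)) ^ 2 := by
  rw [bfQ_expand]
  simp [Fin.sum_univ_two, Fin.sum_univ_eight, E8M]
  ring

theorem mem_DualΛ_iff (x : JΛ → ℚ) : x ∈ DualΛ ↔
    (∀ i, ∃ n : ℤ, x (.inl i) = n) ∧ (∀ i, ∃ n : ℤ, x (.inr (.inl i)) = n) ∧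
      ∀ a, ∃ n : ℤ, 2 * x (.inr (.inr a)) = n := by
  constructor
  · intro h
    have hs (j : JΛ) : ∃ n : ℤ, bfQ x (Pi.single j 1) = n := by
      refine h _ ((mem_LΛ_iff _).2 fun i => ?_)
      by_cases hij : i = j
      · subst hij; exact ⟨1, by simp⟩
      · exact ⟨0, by simp [hij]⟩
    refine ⟨?_, ?_, ?_⟩
    · rintro ⟨a, i⟩
      fin_cases i
      · obtain ⟨n, hn⟩ := hs (.inl (a, 1))
        refine ⟨n, ?_⟩
        rw [← hn, bfQ_expand]
        simp [Pi.single_apply]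
      · obtain ⟨n, hn⟩ := hs (.inl (a, 0))
        refine ⟨n, ?_⟩
        rw [← hn, bfQ_expand]
        simp [Pi.single_apply]
    · rintro ⟨a, k⟩
      choose n hn using fun j : Fin 8 => hs (.inr (.inl (a, j)))
      refine ⟨∑ j, n j * E8Inv j k, ?_⟩
      have hn' (j : Fin 8) : (n j : ℚ) = ∑ i : Fin 8, x (.inr (.inl (a, i))) * (E8M i j : ℚ) := by
        rw [← hn, bfQ_expand]
        simp [Pi.single_apply, Prod.ext_iff, ite_and]
      have hinv (i : Fin 8) : ∑ j, (E8M i j : ℚ) * (E8Inv j k : ℚ) = if i = k then 1 else 0 := by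
        have := congrFun (congrFun E8M_mul_E8Inv i) k
        rw [Matrix.mul_apply, Matrix.one_apply] at this
        exact_mod_cast this
      push_cast
      simp only [hn', Finset.sum_mul]
      rw [Finset.sum_comm]
      simp only [mul_assoc, ← Finset.mul_sum, hinv]
      simp
    · intro a
      obtain ⟨n, hn⟩ := hs (.inr (.inr a))
      refine ⟨-n, ?_⟩
      push_cast
      rw [← hn, bfQ_expand]
      simp [Pi.single_apply]
  · rintro ⟨hU, hE, hT⟩ l hl
    choose m hm using (mem_LΛ_iff l).1 hl
    choose u hu using hU
    choose e he using hE
    choose t ht using hT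
    refine ⟨∑ a : Fin 2, (u (a, 0) * m (.inl (a, 1)) + u (a, 1) * m (.inl (a, 0)))
      + ∑ a : Fin 2, ∑ j : Fin 8, (∑ i : Fin 8, e (a, i) * E8M i j) * m (.inr (.inl (a, j)))
      - ∑ a : Fin 2, t a * m (.inr (.inr a)), ?_⟩
    rw [bfQ_expand]
    push_cast
    simp only [hm, hu, he, ← ht, Finset.mul_sum, mul_assoc]

/-- Twice the `a`-th coordinate of a dual vector in `[-2]^{⊕2}`, as an integer. -/
def twiceCoord (x : JΛ → ℚ) (a : Fin 2) : ℤ := ⌊2 * x (.inr (.inr a))⌋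

theorem twiceCoord_cast {x : JΛ → ℚ} (hx : x ∈ DualΛ) (a : Fin 2) :
    (twiceCoord x a : ℚ) = 2 * x (.inr (.inr a)) := by
  obtain ⟨n, hn⟩ := ((mem_DualΛ_iff x).1 hx).2.2 a
  simp [twiceCoord, hn]

theorem twiceCoord_add {x y : JΛ → ℚ} (hx : x ∈ DualΛ) (hy : y ∈ DualΛ) (a : Fin 2) :
    twiceCoord (x + y) a = twiceCoord x a + twiceCoord y a := by
  have h := twiceCoord_cast (DualΛ.add_mem hx hy) a
  have : (twiceCoord (x + y) a : ℚ) = twiceCoord x a + twiceCoord y a := by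
    rw [h, twiceCoord_cast hx, twiceCoord_cast hy, Pi.add_apply]; ring
  exact_mod_cast this

/-- Reduction of a dual vector to its class in `(ℤ/2ℤ)²`. -/
def discMap : DualΛ →ₗ[ℤ] ZMod 2 × ZMod 2 :=
  (AddMonoidHom.mk' (fun x : DualΛ =>
    (((twiceCoord x 0 : ℤ) : ZMod 2), ((twiceCoord x 1 : ℤ) : ZMod 2))) (by
      intro x y
      simp [twiceCoord_add x.2 y.2])).toIntLinearMap

theorem discMap_apply (x : DualΛ) :
    discMap x = (((twiceCoord x 0 : ℤ) : ZMod 2), ((twiceCoord x 1 : ℤ) : ZMod 2)) := rfl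

theorem discMap_ker : LinearMap.ker discMap = Submodule.comap DualΛ.subtype LΛ := by
  ext x
  have hx := (mem_DualΛ_iff (x : JΛ → ℚ)).1 x.2
  have key (a : Fin 2) : ((twiceCoord x a : ℤ) : ZMod 2) = 0 ↔
      ∃ n : ℤ, (x : JΛ → ℚ) (.inr (.inr a)) = n := by
    rw [ZMod.intCast_zmod_eq_zero_iff_dvd]
    have h := twiceCoord_cast x.2 a
    constructor
    · rintro ⟨n, hn⟩
      refine ⟨n, ?_⟩
      rw [hn] at h
      push_cast at h
      linarith
    · rintro ⟨n, hn⟩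
      refine ⟨n, ?_⟩
      rw [hn] at h
      exact_mod_cast h
  rw [LinearMap.mem_ker, Submodule.mem_comap, discMap_apply, Prod.mk_eq_zero, key, key,
    Submodule.coe_subtype, mem_LΛ_iff]
  constructor
  · rintro ⟨h0, h1⟩ (i | i | a)
    · exact hx.1 i
    · exact hx.2.1 i
    · fin_cases a
      · exact h0
      · exact h1
  · exact fun h => ⟨h _, h _⟩

theorem discMap_surjective : Function.Surjective discMap := by
  rintro ⟨p, q⟩
  let v : JΛ → ℚ := fun
    | .inr (.inr a) => (if a = 0 then (p.val : ℚ) else q.val) / 2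
    | _ => 0
  have hv : v ∈ DualΛ := by
    rw [mem_DualΛ_iff]
    refine ⟨fun _ => ⟨0, by simp [v]⟩, fun _ => ⟨0, by simp [v]⟩, fun a => ?_⟩
    refine ⟨if a = 0 then p.val else q.val, ?_⟩
    simp only [v]
    split_ifs <;> push_cast <;> ring
  have h0 : twiceCoord v 0 = p.val := by
    have := twiceCoord_cast hv 0
    simp only [v, if_true] at this
    rw [mul_div_cancel₀ _ two_ne_zero] at this
    exact_mod_cast this
  have h1 : twiceCoord v 1 = q.val := by
    have := twiceCoord_cast hv 1
    simp only [v, one_ne_zero, if_false] at this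
    rw [mul_div_cancel₀ _ two_ne_zero] at this
    exact_mod_cast this
  refine ⟨⟨v, hv⟩, ?_⟩
  rw [discMap_apply]
  simp [h0, h1]

/-- The isomorphism `D_Λ ≃ (ℤ/2ℤ)²`. -/
noncomputable def discEquiv : DiscΛ ≃+ ZMod 2 × ZMod 2 :=
  ((Submodule.quotEquivOfEq _ _ discMap_ker.symm).trans
    (discMap.quotKerEquivOfSurjective discMap_surjective)).toAddEquiv

theorem discEquiv_mk (x : DualΛ) : discEquiv (Submodule.Quotient.mk x) = discMap x := rfl

/-- Hamming weight on `(ℤ/2ℤ)²`; the discriminant form is `-weight/2` modulo `2`. -/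
def weight (z : ZMod 2 × ZMod 2) : ℤ := z.1.val + z.2.val

theorem exists_sq_eq_four_mul_add_val (n : ℤ) : ∃ k : ℤ, n ^ 2 = 4 * k + ((n : ZMod 2).val : ℤ) := by
  rw [ZMod.val_intCast]
  obtain ⟨m, rfl | rfl⟩ := n.even_or_odd'
  · exact ⟨m ^ 2, by simp; ring⟩
  · refine ⟨m ^ 2 + m, ?_⟩
    have : (2 * m + 1) % ((2 : ℕ) : ℤ) = 1 := by push_cast; omega
    rw [this]; ring

theorem bfQ_self_eq (x : DualΛ) :
    ∃ k : ℤ, bfQ (x : JΛ → ℚ) x = 2 * k - weight (discMap x) / 2 := by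
  obtain ⟨hU, hE, -⟩ := (mem_DualΛ_iff (x : JΛ → ℚ)).1 x.2
  choose u hu using hU
  choose e he using hE
  obtain ⟨k₀, hk₀⟩ := exists_sq_eq_four_mul_add_val (twiceCoord x 0)
  obtain ⟨k₁, hk₁⟩ := exists_sq_eq_four_mul_add_val (twiceCoord x 1)
  refine ⟨∑ a : Fin 2, u (a, 0) * u (a, 1)
      + ∑ a : Fin 2, (-∑ i : Fin 8, e (a, i) ^ 2 + e (a, 0) * e (a, 2) + e (a, 1) * e (a, 3)
        + e (a, 2) * e (a, 3) + e (a, 3) * e (a, 4) + e (a, 4) * e (a, 5)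
        + e (a, 5) * e (a, 6) + e (a, 6) * e (a, 7)) - k₀ - k₁, ?_⟩
  rw [bfQ_self_expand, discMap_apply, weight]
  have h₀ := twiceCoord_cast x.2 0
  have h₁ := twiceCoord_cast x.2 1
  have hk₀' := congrArg (Int.cast : ℤ → ℚ) hk₀
  have hk₁' := congrArg (Int.cast : ℤ → ℚ) hk₁
  push_cast at hk₀' hk₁' ⊢
  rw [h₀] at hk₀'
  rw [h₁] at hk₁'
  simp only [hu, he, Fin.sum_univ_two (fun a => (x : JΛ → ℚ) (.inr (.inr a)) ^ 2)]
  linarith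

theorem bfQ_sub_even_iff (x y : DualΛ) :
    (∃ k : ℤ, bfQ (y : JΛ → ℚ) y - bfQ (x : JΛ → ℚ) x = 2 * (k : ℚ)) ↔
      weight (discMap y) = weight (discMap x) := by
  obtain ⟨a, ha⟩ := bfQ_self_eq x
  obtain ⟨b, hb⟩ := bfQ_self_eq y
  have bound : ∀ z, 0 ≤ weight z ∧ weight z ≤ 2 := by decide
  have hx := bound (discMap x)
  have hy := bound (discMap y)
  rw [ha, hb]
  constructor
  · rintro ⟨k, hk⟩
    have : weight (discMap x) - weight (discMap y) = 4 * (k - b + a) := by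
      have : (weight (discMap x) : ℚ) - weight (discMap y) = 4 * (k - b + a) := by linarith
      exact_mod_cast this
    omega
  · intro h
    exact ⟨b - a, by rw [h]; push_cast; ring⟩

theorem eq_self_or_swap_of_weight (g : ZMod 2 × ZMod 2 →+ ZMod 2 × ZMod 2)
    (hg : ∀ z, weight (g z) = weight z) : (∀ z, g z = z) ∨ ∀ z, g z = z.swap := by
  have key : ∀ a b : ZMod 2 × ZMod 2, weight a = 1 → weight b = 1 → weight (a + b) = 2 →
      (a = (1, 0) ∧ b = (0, 1)) ∨ (a = (0, 1) ∧ b = (1, 0)) := by decide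
  have hcases : ∀ z : ZMod 2 × ZMod 2, z = 0 ∨ z = (1, 0) ∨ z = (0, 1) ∨ z = (1, 0) + (0, 1) := by
    decide
  have hadd := map_add g (1, 0) (0, 1)
  rcases key (g (1, 0)) (g (0, 1)) (hg _) (hg _) (hadd ▸ hg _) with ⟨h0, h1⟩ | ⟨h0, h1⟩
  · left
    intro z
    rcases hcases z with rfl | rfl | rfl | rfl
    · exact map_zero g
    · exact h0
    · exact h1
    · rw [hadd, h0, h1]
  · right
    intro z
    rcases hcases z with rfl | rfl | rfl | rfl
    · exact map_zero g
    · exact h0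
    · exact h1
    · rw [hadd, h0, h1]; rfl

/-- An automorphism of `D_Λ` is an isometry exactly when it preserves weights. -/
theorem isometry_iff_weight (f : DiscΛ ≃+ DiscΛ) :
    (∀ x y : DualΛ, f (Submodule.Quotient.mk x) = Submodule.Quotient.mk y →
      ∃ k : ℤ, bfQ (y : JΛ → ℚ) (y : JΛ → ℚ) - bfQ (x : JΛ → ℚ) (x : JΛ → ℚ) = 2 * (k : ℚ)) ↔
    ∀ d, weight (discEquiv (f d)) = weight (discEquiv d) := by
  constructor
  · intro h d
    obtain ⟨x, rfl⟩ := Submodule.Quotient.mk_surjective _ d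
    obtain ⟨y, hy⟩ := Submodule.Quotient.mk_surjective _ (f (Submodule.Quotient.mk x))
    rw [← hy, discEquiv_mk, discEquiv_mk]
    exact (bfQ_sub_even_iff x y).1 (h x y hy.symm)
  · intro h x y hxy
    have := h (Submodule.Quotient.mk x)
    rw [hxy, discEquiv_mk, discEquiv_mk] at this
    exact (bfQ_sub_even_iff x y).2 this

theorem card_isometries_DiscΛ :
    Nat.card {f : DiscΛ ≃+ DiscΛ //
        ∀ x y : DualΛ, f (Submodule.Quotient.mk x) = Submodule.Quotient.mk y →
          ∃ k : ℤ, bfQ (y : JΛ → ℚ) (y : JΛ → ℚ) -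
            bfQ (x : JΛ → ℚ) (x : JΛ → ℚ) = 2 * (k : ℚ)} = 2 := by
  rw [Nat.card_eq_two_iff]
  let s : DiscΛ ≃+ DiscΛ := (discEquiv.trans AddEquiv.prodComm).trans discEquiv.symm
  have hs (d : DiscΛ) : discEquiv (s d) = (discEquiv d).swap := by
    change discEquiv (discEquiv.symm _) = _
    rw [AddEquiv.apply_symm_apply]; rfl
  refine ⟨⟨AddEquiv.refl _, (isometry_iff_weight _).2 fun _ => rfl⟩,
    ⟨s, (isometry_iff_weight _).2 fun d => ?_⟩, ?_, ?_⟩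
  · rw [hs]; exact add_comm _ _
  · intro h
    have h' := congrArg (fun f : DiscΛ ≃+ DiscΛ => discEquiv (f (discEquiv.symm (1, 0))))
      (Subtype.ext_iff.1 h)
    simp only [hs, AddEquiv.refl_apply, AddEquiv.apply_symm_apply] at h'
    exact absurd h' (by decide)
  · refine Set.eq_univ_of_forall ?_
    rintro ⟨f, hf⟩
    have hw := (isometry_iff_weight f).1 hf
    let g : ZMod 2 × ZMod 2 →+ ZMod 2 × ZMod 2 :=
      ((discEquiv.symm.trans f).trans discEquiv).toAddMonoidHom
    have hg (d : DiscΛ) : g (discEquiv d) = discEquiv (f d) :=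
      congrArg (fun d => discEquiv (f d)) (discEquiv.symm_apply_apply d)
    have hgw (z : ZMod 2 × ZMod 2) : weight (g z) = weight z := by
      obtain ⟨d, rfl⟩ := discEquiv.surjective z
      rw [hg, hw]
    rcases eq_self_or_swap_of_weight g hgw with h | h
    · left
      refine Subtype.ext (AddEquiv.ext fun d => discEquiv.injective ?_)
      exact (hg d).symm.trans (h _)
    · right
      refine Subtype.ext (AddEquiv.ext fun d => discEquiv.injective ?_)
      exact (hg d).symm.trans ((h _).trans (hs d).symm)

theorem IsIsomΛ.map_mem_DualΛ {f : (JΛ → ℚ) ≃ₗ[ℚ] (JΛ → ℚ)} (hf : IsIsomΛ f) {x : JΛ → ℚ}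
    (hx : x ∈ DualΛ) : f x ∈ DualΛ := by
  intro l hl
  obtain ⟨n, hn⟩ := hx _ (hf.2.2 l hl)
  refine ⟨n, ?_⟩
  rw [← hn, ← hf.1 x, LinearEquiv.apply_symm_apply]

theorem discMap_eq_iff (x y : DualΛ) : discMap x = discMap y ↔ (x : JΛ → ℚ) - y ∈ LΛ := by
  rw [← sub_eq_zero, ← map_sub, ← LinearMap.mem_ker, discMap_ker]
  rfl

/-- The map induced on the dual lattice by an isometry of `Λ`. -/
def IsIsomΛ.dualMap {f : (JΛ → ℚ) ≃ₗ[ℚ] (JΛ → ℚ)} (hf : IsIsomΛ f) : DualΛ →ₗ[ℤ] DualΛ :=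
  (f.toLinearMap.restrictScalars ℤ).restrict fun _ hx => hf.map_mem_DualΛ hx

theorem IsIsomΛ.coe_dualMap {f : (JΛ → ℚ) ≃ₗ[ℚ] (JΛ → ℚ)} (hf : IsIsomΛ f) (x : DualΛ) :
    (hf.dualMap x : JΛ → ℚ) = f x := rfl

theorem IsIsomΛ.stable_iff {f : (JΛ → ℚ) ≃ₗ[ℚ] (JΛ → ℚ)} (hf : IsIsomΛ f) :
    StableΛ f ↔ ∀ x, discMap (hf.dualMap x) = discMap x := by
  simp only [discMap_eq_iff, hf.coe_dualMap]
  exact ⟨fun h x => h x x.2, fun h x hx => h ⟨x, hx⟩⟩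

theorem IsIsomΛ.discMap_dualMap {f : (JΛ → ℚ) ≃ₗ[ℚ] (JΛ → ℚ)} (hf : IsIsomΛ f) :
    (∀ x, discMap (hf.dualMap x) = discMap x) ∨
      ∀ x, discMap (hf.dualMap x) = (discMap x).swap := by
  have hle : Submodule.comap DualΛ.subtype LΛ ≤
      LinearMap.ker (discMap.comp hf.dualMap) := by
    intro x hx
    rw [LinearMap.mem_ker, LinearMap.comp_apply, ← LinearMap.mem_ker, discMap_ker]
    exact hf.2.1 _ hx
  let g : ZMod 2 × ZMod 2 →+ ZMod 2 × ZMod 2 :=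
    (Submodule.liftQ _ _ hle).toAddMonoidHom.comp discEquiv.symm.toAddMonoidHom
  have hg (x : DualΛ) : g (discMap x) = discMap (hf.dualMap x) :=
    congrArg (Submodule.liftQ _ _ hle) (discEquiv.symm_apply_apply (Submodule.Quotient.mk x))
  have hgw (z : ZMod 2 × ZMod 2) : weight (g z) = weight z := by
    obtain ⟨x, rfl⟩ := discMap_surjective z
    rw [hg, ← bfQ_sub_even_iff]
    refine ⟨0, ?_⟩
    rw [hf.coe_dualMap, hf.1]
    simp
  simpa only [discMap_surjective.forall, hg] using eq_self_or_swap_of_weight g hgw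

theorem IsIsomΛ.trans {f g : (JΛ → ℚ) ≃ₗ[ℚ] (JΛ → ℚ)} (hf : IsIsomΛ f) (hg : IsIsomΛ g) :
    IsIsomΛ (f.trans g) :=
  ⟨fun x y => (hg.1 _ _).trans (hf.1 x y), fun x hx => hg.2.1 _ (hf.2.1 x hx),
    fun x hx => hf.2.2 _ (hg.2.2 x hx)⟩

theorem IsIsomΛ.stable_trans {f g : (JΛ → ℚ) ≃ₗ[ℚ] (JΛ → ℚ)} (hf : IsIsomΛ f) (hg : IsIsomΛ g)
    (hfs : ¬StableΛ f) (hgs : ¬StableΛ g) : StableΛ (f.trans g) := by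
  have hf' := hf.discMap_dualMap.resolve_left (mt hf.stable_iff.2 hfs)
  have hg' := hg.discMap_dualMap.resolve_left (mt hg.stable_iff.2 hgs)
  rw [(hf.trans hg).stable_iff]
  intro x
  change discMap (hg.dualMap (hf.dualMap x)) = _
  rw [hg', hf', Prod.swap_swap]

/-- The isometry exchanging the two `[-2]` summands. -/
def swapΛ : (JΛ → ℚ) ≃ₗ[ℚ] (JΛ → ℚ) :=
  LinearEquiv.funCongrLeft ℚ ℚ
    (Equiv.sumCongr (Equiv.refl _) (Equiv.sumCongr (Equiv.refl _) (Equiv.swap 0 1)))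

theorem swapΛ_apply (x : JΛ → ℚ) (i : JΛ) : swapΛ x i =
    x (Sum.map id (Sum.map id (Equiv.swap 0 1)) i) := rfl

theorem isIsomΛ_swapΛ : IsIsomΛ swapΛ := by
  refine ⟨fun x y => ?_, fun x hx => ?_, fun x hx => ?_⟩
  · simp [bfQ_expand, swapΛ_apply, Fin.sum_univ_two]
    ring
  · rw [mem_LΛ_iff] at hx ⊢
    exact fun i => hx _
  · rw [mem_LΛ_iff] at hx ⊢
    exact fun i => hx _

theorem spinPosΛ_swapΛ : SpinPosΛ swapΛ := by
  let v : JΛ → ℚ := fun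
    | .inr (.inr a) => if a = 0 then 1 else -1
    | _ => 0
  have hv (x : JΛ → ℚ) : bfQ x v = -2 * (x (.inr (.inr 0)) - x (.inr (.inr 1))) := by
    simp [bfQ_expand, v, Fin.sum_univ_two]
    ring
  have hvv : bfQ v v = -4 := by
    rw [hv]
    norm_num [v]
  refine ⟨[v], by simp [hvv], ?_, by norm_num [hvv]⟩
  funext x i
  simp only [List.map_cons, List.map_nil, List.foldr_cons, List.foldr_nil, Function.comp_id,
    hvv, hv, Pi.sub_apply, Pi.smul_apply, smul_eq_mul]
  rw [swapΛ_apply]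
  rcases i with i | i | a
  · simp [v]
  · simp [v]
  · fin_cases a <;> simp [v] <;> ring

theorem not_stableΛ_swapΛ : ¬StableΛ swapΛ := by
  intro h
  obtain ⟨x, hx⟩ := discMap_surjective (1, 0)
  have hs := isIsomΛ_swapΛ.stable_iff.1 h x
  have : discMap (isIsomΛ_swapΛ.dualMap x) = (discMap x).swap := by
    simp [discMap_apply, IsIsomΛ.coe_dualMap, twiceCoord, swapΛ_apply]
  rw [this, hx] at hs
  exact absurd hs (by decide)

/-- for `Λ = U^{⊕2} ⊕ E₈^{⊕2} ⊕ [-2]^{⊕2}`, the discriminant group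
`D_Λ` is isomorphic to `(ℤ/2ℤ)²`, the orthogonal group of the finite quadratic form
on `D_Λ` has order 2, and `Õ(Λ) = O⁺(Λ) ∩ O^#(Λ)` has index 2 in `O⁺(Λ)`. -/
theorem stmt_4 :
    Nonempty (DiscΛ ≃+ (ZMod 2 × ZMod 2)) ∧
    (Nat.card {f : DiscΛ ≃+ DiscΛ //
        ∀ x y : DualΛ, f (Submodule.Quotient.mk x) = Submodule.Quotient.mk y →
          ∃ k : ℤ, bfQ (y : JΛ → ℚ) (y : JΛ → ℚ) -
            bfQ (x : JΛ → ℚ) (x : JΛ → ℚ) = 2 * (k : ℚ)} = 2) ∧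
    ((∃ f, IsIsomΛ f ∧ SpinPosΛ f ∧ ¬StableΛ f) ∧
      ∀ f g, IsIsomΛ f → SpinPosΛ f → IsIsomΛ g → SpinPosΛ g →
        ¬StableΛ f → ¬StableΛ g → StableΛ (f.trans g)) :=
  ⟨⟨discEquiv⟩, card_isometries_DiscΛ,
    ⟨swapΛ, isIsomΛ_swapΛ, spinPosΛ_swapΛ, not_stableΛ_swapΛ⟩,
    fun _ _ hf _ hg _ hfs hgs => hf.stable_trans hg hfs hgs⟩
end

section
/- Let Λ = U^{⊕2} ⊕ E₈^{⊕2} ⊕ [−2]^{⊕2} and let L_{K3[3]} = U^{⊕3} ⊕ E₈^{⊕2} ⊕ [−4]. If H ∈ L_{K3[3]} is a primitive vector with H² = 4 and divisibility div(H, L_{K3[3]}) = 2, then the orthogonal complement H^⊥ in L_{K3[3]} is isometric to Λ. -/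
/-- Index type for `L_{K3[3]} = U^{⊕3} ⊕ E₈^{⊕2} ⊕ [-4]`, of rank 23. -/
abbrev I33 : Type := (Fin 3 × Fin 2) ⊕ ((Fin 2 × Fin 8) ⊕ Fin 1)

/-- Gram matrix of `L_{K3[3]} = U^{⊕3} ⊕ E₈^{⊕2} ⊕ [-4]`. -/
def g33 : I33 → I33 → ℤ
  | Sum.inl (a, i), Sum.inl (b, j) => if a = b ∧ i ≠ j then 1 else 0
  | Sum.inr (Sum.inl (a, i)), Sum.inr (Sum.inl (b, j)) => if a = b then E8M i j else 0
  | Sum.inr (Sum.inr _), Sum.inr (Sum.inr _) => -4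
  | _, _ => 0

/-- The bilinear form of `L_{K3[3]}`. -/
def bf33 (x y : I33 → ℤ) : ℤ := ∑ i : I33, ∑ j : I33, x i * g33 i j * y j

/-- The bilinear form of `Λ`. -/
def bfΛ (x y : JΛ → ℤ) : ℤ := ∑ i : JΛ, ∑ j : JΛ, x i * gΛ i j * y j

section Transvections

variable {L : Type*} [AddCommGroup L]

/-- `x` and `y` lie in the same orbit of the orthogonal group of `B`. -/
def SameOrbit (B : LinearMap.BilinForm ℤ L) (x y : L) : Prop :=
  ∃ g : L ≃ₗ[ℤ] L, (∀ u v, B (g u) (g v) = B u v) ∧ g x = y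

variable {B : LinearMap.BilinForm ℤ L}

theorem SameOrbit.refl (x : L) : SameOrbit B x x :=
  ⟨LinearEquiv.refl ℤ L, fun _ _ => rfl, rfl⟩

theorem SameOrbit.trans {x y z : L} (h₁ : SameOrbit B x y) (h₂ : SameOrbit B y z) :
    SameOrbit B x z := by
  obtain ⟨g, hg, rfl⟩ := h₁
  obtain ⟨k, hk, rfl⟩ := h₂
  exact ⟨g.trans k, fun u v => by simp [hk, hg], rfl⟩

theorem SameOrbit.neg (x : L) : SameOrbit B x (-x) :=
  ⟨LinearEquiv.neg ℤ, fun _ _ => by simp, rfl⟩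

/-- The underlying linear map of the Eichler transvection attached to an isotropic vector `e` and
a vector `a` orthogonal to `e` with `a² = 2 q`. -/
def eichlerMap (B : LinearMap.BilinForm ℤ L) (e a : L) (q : ℤ) : L →ₗ[ℤ] L where
  toFun v := v - B a v • e + B e v • a - (q * B e v) • e
  map_add' u v := by simp only [map_add]; module
  map_smul' c v := by simp only [map_smul, smul_eq_mul, RingHom.id_apply]; module

theorem eichlerMap_apply (e a v : L) (q : ℤ) :
    eichlerMap B e a q v = v - B a v • e + B e v • a - (q * B e v) • e := rfl

theorem eichlerMap_neg_comp (hB : ∀ x y, B x y = B y x) {e a : L} {q : ℤ} (he : B e e = 0)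
    (hea : B e a = 0) (ha : B a a = 2 * q) :
    eichlerMap B e (-a) q ∘ₗ eichlerMap B e a q = LinearMap.id := by
  ext v
  have hae : B a e = 0 := by rw [hB, hea]
  simp only [LinearMap.comp_apply, eichlerMap_apply, map_sub, map_add, map_smul, map_neg,
    LinearMap.neg_apply, he, hea, hae, ha, LinearMap.id_apply]
  module

theorem sameOrbit_eichler (hB : ∀ x y, B x y = B y x) {e a : L} {q : ℤ} (he : B e e = 0)
    (hea : B e a = 0) (ha : B a a = 2 * q) (v : L) :
    SameOrbit B v (v - B a v • e + B e v • a - (q * B e v) • e) := by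
  have h₁ := eichlerMap_neg_comp hB he hea ha
  have h₂ := eichlerMap_neg_comp (a := -a) (q := q) hB he (by simp [hea]) (by simp [ha])
  rw [neg_neg] at h₂
  refine ⟨LinearEquiv.ofLinearMap _ _ h₂ h₁, fun u w => ?_, rfl⟩
  have hae : B a e = 0 := by rw [hB, hea]
  simp only [LinearEquiv.coe_ofLinearMap, eichlerMap_apply, map_sub, map_add, map_smul,
    LinearMap.sub_apply, LinearMap.add_apply, LinearMap.smul_apply, smul_eq_mul, he, hea, hae, ha,
    hB u e, hB u a]
  ring

/-- The pairing of `x` with `e` has the least possible nonzero absolute value among all vectors in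
the orbit of `x`, or vanishes on the whole orbit. -/
def MinimalPairing (B : LinearMap.BilinForm ℤ L) (e x : L) : Prop :=
  ∀ y, SameOrbit B x y → B e y ≠ 0 → B e x ≠ 0 ∧ |B e x| ≤ |B e y|

theorem MinimalPairing.of_sameOrbit {e x y : L} (h : MinimalPairing B e x)
    (hxy : SameOrbit B x y) (heq : B e y = B e x) : MinimalPairing B e y := by
  intro z hz hne
  rw [heq]
  exact h z (hxy.trans hz) hne

theorem exists_minimalPairing (B : LinearMap.BilinForm ℤ L) (e x : L) :
    ∃ y, SameOrbit B x y ∧ MinimalPairing B e y := by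
  classical
  by_cases hex : ∃ n : ℕ, ∃ y, SameOrbit B x y ∧ B e y ≠ 0 ∧ (B e y).natAbs = n
  · obtain ⟨y, hxy, hne, hn⟩ := Nat.find_spec hex
    refine ⟨y, hxy, fun z hz hz0 => ⟨hne, ?_⟩⟩
    rw [Int.abs_eq_natAbs, Int.abs_eq_natAbs, Nat.cast_le]
    exact hn.trans_le (Nat.find_min' hex ⟨z, hxy.trans hz, hz0, rfl⟩)
  · refine ⟨x, SameOrbit.refl x, fun y hy hne => ?_⟩
    exact absurd ⟨_, y, hy, hne, rfl⟩ hex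

theorem Int.exists_add_mul_ne_zero_abs_le (y : ℤ) {r : ℤ} (hr : r ≠ 0) :
    ∃ k : ℤ, y + k * r ≠ 0 ∧ |y + k * r| ≤ |r| := by
  have hlt := Int.emod_lt_abs y hr
  have hnn := Int.emod_nonneg y hr
  have hdm := Int.emod_add_mul_ediv y r
  by_cases h0 : y % r = 0
  · exact ⟨1 - y / r, by grind, le_of_eq (congrArg _ (by grind))⟩
  · refine ⟨-(y / r), by grind, ?_⟩
    rw [show y + -(y / r) * r = y % r by grind, abs_of_nonneg hnn]
    exact hlt.le

/-- Two orthogonal hyperbolic pairs `e₁, f₁` and `e₂, f₂`. -/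
structure HyperbolicFrame (B : LinearMap.BilinForm ℤ L) (e₁ f₁ e₂ f₂ : L) : Prop where
  e₁e₁ : B e₁ e₁ = 0
  f₁f₁ : B f₁ f₁ = 0
  e₁f₁ : B e₁ f₁ = 1
  e₂e₂ : B e₂ e₂ = 0
  f₂f₂ : B f₂ f₂ = 0
  e₂f₂ : B e₂ f₂ = 1
  e₁e₂ : B e₁ e₂ = 0
  e₁f₂ : B e₁ f₂ = 0
  f₁e₂ : B f₁ e₂ = 0
  f₁f₂ : B f₁ f₂ = 0

theorem HyperbolicFrame.swap {e₁ f₁ e₂ f₂ : L} (hB : ∀ x y, B x y = B y x)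
    (h : HyperbolicFrame B e₁ f₁ e₂ f₂) : HyperbolicFrame B e₁ f₁ f₂ e₂ :=
  ⟨h.e₁e₁, h.f₁f₁, h.e₁f₁, h.f₂f₂, h.e₂e₂, by rw [hB, h.e₂f₂], h.e₁f₂, h.e₁e₂, h.f₁f₂, h.f₁e₂⟩

theorem MinimalPairing.dvd_frame {e₁ f₁ e₂ f₂ x : L} (hB : ∀ x y, B x y = B y x)
    (h : HyperbolicFrame B e₁ f₁ e₂ f₂) (hx : MinimalPairing B e₁ x) : B e₁ x ∣ B e₂ x := by
  by_contra hdvd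
  have hr : B e₂ x % B e₁ x ≠ 0 := fun h0 => hdvd (Int.dvd_of_emod_eq_zero h0)
  have hdm := Int.emod_add_mul_ediv (B e₂ x) (B e₁ x)
  set c := B e₂ x / B e₁ x
  have hO := sameOrbit_eichler (q := 0) (a := (-c) • f₂) hB h.e₁e₁ (by simp [h.e₁f₂])
    (by simp [h.f₂f₂]) x
  set y := x - B ((-c) • f₂) x • e₁ + B e₁ x • ((-c) • f₂) - (0 * B e₁ x) • e₁ with hy
  have hy₁ : B e₁ y = B e₁ x := by
    simp [hy, h.e₁e₁, h.e₁f₂]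
  have hy₂ : B e₂ y = B e₂ x % B e₁ x := by
    simp [hy, hB e₂ e₁, h.e₁e₂, h.e₂f₂]
    linarith
  obtain ⟨k, hk, hk'⟩ := Int.exists_add_mul_ne_zero_abs_le (B e₁ x) hr
  have hO' := sameOrbit_eichler (q := 0) (a := k • f₁) hB h.e₂e₂ (by simp [hB e₂ f₁, h.f₁e₂])
    (by simp [h.f₁f₁]) y
  set z := y - B (k • f₁) y • e₂ + B e₂ y • (k • f₁) - (0 * B e₂ y) • e₂ with hz
  have hz₁ : B e₁ z = B e₁ x + k * (B e₂ x % B e₁ x) := by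
    simp [hz, h.e₁e₂, h.e₁f₁, hy₁, hy₂]
    ring
  obtain ⟨h0, hle⟩ := hx z (hO.trans hO') (by rwa [hz₁])
  rw [hz₁] at hle
  have hlt := Int.emod_lt_abs (B e₂ x) h0
  have hnn := Int.emod_nonneg (B e₂ x) h0
  rw [abs_of_nonneg hnn] at hk'
  omega

theorem MinimalPairing.dvd {e₁ f₁ e₂ f₂ x : L} (hB : ∀ x y, B x y = B y x)
    (heven : ∀ x, Even (B x x)) (h : HyperbolicFrame B e₁ f₁ e₂ f₂)
    (hx : MinimalPairing B e₁ x) (a : L) : B e₁ x ∣ B a x := by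
  have hdf : B e₁ x ∣ B f₂ x := hx.dvd_frame hB (h.swap hB)
  have hde : B e₁ x ∣ B e₂ x := hx.dvd_frame hB h
  have key : ∀ b, B b e₂ = 0 → B b f₂ = 0 → B e₁ x ∣ B b x := by
    intro b hbe hbf
    obtain ⟨c, hc⟩ := hde
    have hO := sameOrbit_eichler (q := 0) (a := (-c) • f₂) hB h.e₁e₁ (by simp [h.e₁f₂])
      (by simp [h.f₂f₂]) x
    set y := x - B ((-c) • f₂) x • e₁ + B e₁ x • ((-c) • f₂) - (0 * B e₁ x) • e₁ with hy
    have hy₁ : B e₁ y = B e₁ x := by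
      simp [hy, h.e₁e₁, h.e₁f₂]
    have hy₂ : B e₂ y = 0 := by
      simp [hy, hB e₂ e₁, h.e₁e₂, h.e₂f₂]
      linarith
    have hyb : B b y = B b x + c * B f₂ x * B b e₁ := by
      simp [hy, hbf]
    have hmin := hx.of_sameOrbit hO hy₁
    obtain ⟨q, hq⟩ := (heven b).exists_two_nsmul
    have hO' := sameOrbit_eichler (q := q) (a := b) hB h.e₂e₂ (by rw [hB, hbe])
      (by simpa using hq) y
    rw [hy₂] at hO'
    have hz₁ : B e₁ (y - B b y • e₂ + (0 : ℤ) • b - (q * 0) • e₂) = B e₁ y := by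
      simp [h.e₁e₂]
    have hz := (hmin.of_sameOrbit hO' hz₁).dvd_frame hB (h.swap hB)
    rw [hz₁, hy₁] at hz
    have hy' := hmin.dvd_frame hB (h.swap hB)
    rw [hy₁] at hy'
    have hby : B e₁ x ∣ B b y := by
      have := dvd_sub hy' hz
      simpa [hB f₂ e₂, h.e₂f₂] using this
    rw [hyb] at hby
    exact (dvd_add_left ((hdf.mul_left c).mul_right _)).1 hby
  have := key (a - B a f₂ • e₂ - B a e₂ • f₂)
    (by simp [h.e₂e₂, hB f₂ e₂, h.e₂f₂]) (by simp [h.e₂f₂, h.f₂f₂])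
  have h' : B a x = B (a - B a f₂ • e₂ - B a e₂ • f₂) x + B a f₂ * B e₂ x + B a e₂ * B f₂ x := by
    simp
    ring
  rw [h']
  exact dvd_add (dvd_add this (hde.mul_left _)) (hdf.mul_left _)

/-- A vector of divisibility `2` can be moved so that it pairs to `2` with `e₁`. -/
theorem exists_sameOrbit_pairing_eq_two {e₁ f₁ e₂ f₂ x : L} (hB : ∀ x y, B x y = B y x)
    (heven : ∀ x, Even (B x x)) (h : HyperbolicFrame B e₁ f₁ e₂ f₂)
    (hdiv : ∀ y, 2 ∣ B x y) (hex : ∃ y, B x y = 2) :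
    ∃ y, SameOrbit B x y ∧ B e₁ y = 2 := by
  obtain ⟨y, ⟨g, hg, rfl⟩, hmin⟩ := exists_minimalPairing B e₁ x
  obtain ⟨a, ha⟩ := hex
  have h₁ : B e₁ (g x) ∣ 2 := by
    have := hmin.dvd hB heven h (g a)
    rwa [hg, hB a, ha] at this
  have h₂ : 2 ∣ B e₁ (g x) := by
    have := hdiv (g.symm e₁)
    rwa [← hg, g.apply_symm_apply, hB] at this
  rcases Int.natAbs_eq_natAbs_iff.1 (Int.natAbs_eq_of_dvd_dvd h₁ h₂) with h' | h'
  · exact ⟨g x, ⟨g, hg, rfl⟩, h'⟩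
  · exact ⟨-g x, SameOrbit.trans ⟨g, hg, rfl⟩ (SameOrbit.neg _), by simp [h']⟩

/-- A vector of square `4` pairing to `2` with `e` and congruent modulo `2` to a vector `w`
of square `-4` orthogonal to the hyperbolic pair `e, f` is in the orbit of `2 e + 2 f + w`. -/
theorem sameOrbit_of_pairing_eq_two {e f w u : L} (hB : ∀ x y, B x y = B y x)
    (heven : ∀ x, Even (B x x)) (hee : B e e = 0) (hff : B f f = 0) (hef : B e f = 1)
    (hew : B e w = 0) (hfw : B f w = 0) (hww : B w w = -4)
    (hpair : B e (w + (2 : ℤ) • u) = 2) (hsq : B (w + (2 : ℤ) • u) (w + (2 : ℤ) • u) = 4) :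
    SameOrbit B (w + (2 : ℤ) • u) ((2 : ℤ) • e + (2 : ℤ) • f + w) := by
  have heu : B e u = 1 := by
    simp [hew] at hpair
    linarith
  set a := f + B f u • e - u with ha
  have hea : B e a = 0 := by simp [ha, hef, hee, heu]
  obtain ⟨q, hq⟩ := (heven a).exists_two_nsmul
  have hO := sameOrbit_eichler (q := q) hB hee hea (by simpa using hq) (w + (2 : ℤ) • u)
  convert hO using 1
  rw [hpair]
  have hwe : B w e = 0 := by rw [hB, hew]
  have hwf : B w f = 0 := by rw [hB, hfw]
  have hq' : 2 * q = B a a := by simpa using hq.symm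
  have haa : B a a = B u u - 2 * B f u := by
    simp [ha, hef, hee, hff, heu, hB f e, hB u e, hB u f]
    ring
  have hau : B a (w + (2 : ℤ) • u) = -B u w + 4 * B f u - 2 * B u u := by
    simp [ha, hew, hfw, heu]
    ring
  have huu : B u w + B u u = 2 := by
    simp [hww, hB w u] at hsq
    linarith
  have hcoef : 2 * B f u - B a (w + (2 : ℤ) • u) - q * 2 = 2 := by
    linarith
  have : w + (2 : ℤ) • u - B a (w + (2 : ℤ) • u) • e + (2 : ℤ) • a - (q * 2) • e
      = (2 * B f u - B a (w + (2 : ℤ) • u) - q * 2) • e + (2 : ℤ) • f + w := by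
    rw [ha]
    module
  rw [this, hcoef]

end Transvections

/-- The `E₈` summand of the two bilinear forms. -/
def bfE8 (x y : Fin 2 × Fin 8 → ℤ) : ℤ :=
  ∑ p, ∑ q, x p * (if p.1 = q.1 then E8M p.2 q.2 else 0) * y q

theorem bf33_eq (x y : I33 → ℤ) :
    bf33 x y = x (.inl (0, 0)) * y (.inl (0, 1)) + x (.inl (0, 1)) * y (.inl (0, 0))
      + (x (.inl (1, 0)) * y (.inl (1, 1)) + x (.inl (1, 1)) * y (.inl (1, 0)))
      + (x (.inl (2, 0)) * y (.inl (2, 1)) + x (.inl (2, 1)) * y (.inl (2, 0)))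
      + bfE8 (fun p => x (.inr (.inl p))) (fun p => y (.inr (.inl p)))
      - 4 * (x (.inr (.inr 0)) * y (.inr (.inr 0))) := by
  simp only [bf33, bfE8, Fintype.sum_sum_type, g33, mul_zero, zero_mul, Finset.sum_const_zero,
    add_zero, zero_add, Finset.univ_unique, Finset.sum_singleton]
  simp [Fintype.sum_prod_type (γ := ℤ) (α₁ := Fin 3), Fin.sum_univ_succ (n := 2),
    Fin.sum_univ_succ (n := 1)]
  ring

theorem bfΛ_eq (x y : JΛ → ℤ) :
    bfΛ x y = x (.inl (0, 0)) * y (.inl (0, 1)) + x (.inl (0, 1)) * y (.inl (0, 0))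
      + (x (.inl (1, 0)) * y (.inl (1, 1)) + x (.inl (1, 1)) * y (.inl (1, 0)))
      + bfE8 (fun p => x (.inr (.inl p))) (fun p => y (.inr (.inl p)))
      - 2 * (x (.inr (.inr 0)) * y (.inr (.inr 0)))
      - 2 * (x (.inr (.inr 1)) * y (.inr (.inr 1))) := by
  simp only [bfΛ, bfE8, Fintype.sum_sum_type, gΛ, mul_zero, zero_mul, Finset.sum_const_zero,
    add_zero, zero_add]
  simp only [Fintype.sum_prod_type, Fin.sum_univ_two]
  simp
  ring

/-- `bf33` as a bilinear form. -/
def B33 : LinearMap.BilinForm ℤ (I33 → ℤ) := Matrix.toBilin' (Matrix.of g33)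

theorem B33_apply (x y : I33 → ℤ) : B33 x y = bf33 x y := by
  simp [B33, Matrix.toBilin'_apply, bf33]

theorem E8M_symm (i j : Fin 8) : E8M i j = E8M j i := by
  fin_cases i <;> fin_cases j <;> rfl

theorem bfE8_comm (x y : Fin 2 × Fin 8 → ℤ) : bfE8 x y = bfE8 y x := by
  unfold bfE8
  rw [Finset.sum_comm]
  refine Finset.sum_congr rfl fun p _ => Finset.sum_congr rfl fun q _ => ?_
  rw [E8M_symm]
  simp only [eq_comm (a := q.1)]
  ring

theorem B33_comm (x y : I33 → ℤ) : B33 x y = B33 y x := by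
  rw [B33_apply, B33_apply, bf33_eq, bf33_eq, bfE8_comm]
  ring

/-- The quadratic form of `E₈`, written out in the simple roots. -/
theorem sum_E8M_self (z : Fin 8 → ℤ) :
    ∑ i, ∑ j, z i * E8M i j * z j = 2 * (z 0 * z 2 + z 1 * z 3 + z 2 * z 3 + z 3 * z 4 + z 4 * z 5
      + z 5 * z 6 + z 6 * z 7 - z 0 ^ 2 - z 1 ^ 2 - z 2 ^ 2 - z 3 ^ 2 - z 4 ^ 2 - z 5 ^ 2 - z 6 ^ 2
      - z 7 ^ 2) := by
  simp [Fin.sum_univ_eight, E8M]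
  ring

theorem bfE8_eq (x y : Fin 2 × Fin 8 → ℤ) :
    bfE8 x y = ∑ i, ∑ j, x (0, i) * E8M i j * y (0, j) + ∑ i, ∑ j, x (1, i) * E8M i j * y (1, j) := by
  simp [bfE8, Fintype.sum_prod_type]

theorem even_B33_self (x : I33 → ℤ) : Even (B33 x x) := by
  rw [B33_apply, bf33_eq, bfE8_eq, sum_E8M_self (fun i => x (.inr (.inl (0, i)))),
    sum_E8M_self (fun i => x (.inr (.inl (1, i))))]
  grind

/-- The `E₈` lattice is unimodular modulo `2`. -/
theorem two_dvd_of_E8M (z : Fin 8 → ℤ) (h : ∀ j, 2 ∣ ∑ i, z i * E8M i j) (i : Fin 8) : 2 ∣ z i := by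
  have h0 := h 0
  have h1 := h 1
  have h2 := h 2
  have h3 := h 3
  have h4 := h 4
  have h5 := h 5
  have h6 := h 6
  have h7 := h 7
  simp [Fin.sum_univ_eight, E8M] at h0 h1 h2 h3 h4 h5 h6 h7
  fin_cases i <;> simp <;> omega

theorem bf33_single (H : I33 → ℤ) (j : I33) :
    bf33 H (Pi.single j 1) = ∑ i, H i * g33 i j := by
  simp [bf33, Pi.single_apply]

/-- The generator of the summand `[-4]`. -/
def w33 : I33 → ℤ := Pi.single (.inr (.inr 0)) 1

theorem exists_eq_w33_add_two_smul {H : I33 → ℤ}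
    (hprim : ∀ (c : ℤ) (w : I33 → ℤ), H = c • w → IsUnit c)
    (hdiv : ∀ y : I33 → ℤ, 2 ∣ bf33 H y) : ∃ u, H = w33 + (2 : ℤ) • u := by
  have hU : ∀ p, 2 ∣ H (.inl p) := by
    rintro ⟨a, i⟩
    have := hdiv (Pi.single (.inl (a, 1 - i)) 1)
    rw [bf33_eq] at this
    revert this
    fin_cases a <;> fin_cases i <;> simp [bfE8]
  have hE : ∀ p, 2 ∣ H (.inr (.inl p)) := by
    rintro ⟨a, i⟩
    refine two_dvd_of_E8M (fun i => H (.inr (.inl (a, i)))) (fun j => ?_) i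
    have := hdiv (Pi.single (.inr (.inl (a, j))) 1)
    rw [bf33_single] at this
    simp only [Fintype.sum_sum_type, g33, mul_zero, Finset.sum_const_zero, add_zero, zero_add,
      Fintype.sum_prod_type] at this
    simpa using this
  have hw : ¬ 2 ∣ H (.inr (.inr 0)) := by
    intro hw
    have hall : ∀ i, 2 ∣ H i := by
      rintro (p | p | p)
      · exact hU p
      · exact hE p
      · rwa [Subsingleton.elim p 0]
    choose u hu using hall
    have := hprim 2 u (funext fun i => by simp [hu i])
    revert this
    decide
  have hall : ∀ i, 2 ∣ H i - w33 i := by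
    rintro (p | p | p)
    · simpa [w33] using hU p
    · simpa [w33] using hE p
    · rw [Subsingleton.elim p 0]
      simp [w33]
      omega
  choose u hu using hall
  exact ⟨u, funext fun i => by simp [← hu i]⟩

/-- The standard basis vector of the summand `U^{⊕3}`. -/
def uVec (p : Fin 3 × Fin 2) : I33 → ℤ := Pi.single (.inl p) 1

theorem hyperbolicFrame_uVec :
    HyperbolicFrame B33 (uVec (0, 0)) (uVec (0, 1)) (uVec (1, 0)) (uVec (1, 1)) := by
  constructor <;> simp [B33_apply, bf33_eq, uVec, bfE8]

/-- The vector `2 e + 2 f + w` of square `4` and divisibility `2`. -/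
def stdVec : I33 → ℤ := (2 : ℤ) • uVec (0, 0) + (2 : ℤ) • uVec (0, 1) + w33

theorem sameOrbit_stdVec {H : I33 → ℤ}
    (hprim : ∀ (c : ℤ) (w : I33 → ℤ), H = c • w → IsUnit c) (hH2 : bf33 H H = 4)
    (hdiv : ∀ y : I33 → ℤ, 2 ∣ bf33 H y) (hex : ∃ y : I33 → ℤ, bf33 H y = 2) :
    SameOrbit B33 H stdVec := by
  simp only [← B33_apply] at hH2 hdiv hex
  have hF := hyperbolicFrame_uVec
  obtain ⟨_, ⟨g, hg, rfl⟩, hpair⟩ :=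
    exists_sameOrbit_pairing_eq_two B33_comm even_B33_self hF hdiv hex
  obtain ⟨u, hu⟩ : ∃ u, g H = w33 + (2 : ℤ) • u := by
    refine exists_eq_w33_add_two_smul (fun c w hc => hprim c (g.symm w) ?_) fun y => ?_
    · rw [← map_smul, ← hc, g.symm_apply_apply]
    · rw [← B33_apply, ← g.apply_symm_apply y, hg]
      exact hdiv _
  refine SameOrbit.trans ⟨g, hg, rfl⟩ ?_
  rw [← hg, hu] at hH2
  rw [hu] at hpair ⊢
  refine sameOrbit_of_pairing_eq_two B33_comm even_B33_self hF.e₁e₁ hF.f₁f₁ hF.e₁f₁ ?_ ?_ ?_ hpair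
    hH2 <;> simp [B33_apply, bf33_eq, uVec, w33, bfE8]

/-- The embedding of `Λ` onto the orthogonal complement of `2 e + 2 f + w`; the two generators of
square `-2` go to `e - f` and `e + f + w`. -/
def stdEmb : (JΛ → ℤ) →ₗ[ℤ] (I33 → ℤ) where
  toFun x
    | .inl (0, 0) => x (.inr (.inr 0)) + x (.inr (.inr 1))
    | .inl (0, 1) => -x (.inr (.inr 0)) + x (.inr (.inr 1))
    | .inl (1, i) => x (.inl (0, i))
    | .inl (2, i) => x (.inl (1, i))
    | .inr (.inl p) => x (.inr (.inl p))
    | .inr (.inr _) => x (.inr (.inr 1))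
  map_add' x y := by
    ext i
    rcases i with ⟨a, i⟩ | p | p
    · fin_cases a <;> fin_cases i <;> simp <;> ring
    · rfl
    · rfl
  map_smul' c x := by
    ext i
    rcases i with ⟨a, i⟩ | p | p
    · fin_cases a <;> fin_cases i <;> simp <;> ring
    · rfl
    · rfl

theorem bf33_stdEmb (x y : JΛ → ℤ) : bf33 (stdEmb x) (stdEmb y) = bfΛ x y := by
  rw [bf33_eq, bfΛ_eq]
  simp [stdEmb]
  ring

theorem stdEmb_injective : Function.Injective stdEmb := by
  intro x y h
  have h' := fun i => congrFun h i
  have h1 : x (.inr (.inr 1)) = y (.inr (.inr 1)) := h' (.inr (.inr 0))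
  have h0 : x (.inr (.inr 0)) + x (.inr (.inr 1)) = y (.inr (.inr 0)) + y (.inr (.inr 1)) :=
    h' (.inl (0, 0))
  ext i
  rcases i with ⟨a, i⟩ | p | p
  · fin_cases a
    · exact h' (.inl (1, i))
    · exact h' (.inl (2, i))
  · exact h' (.inr (.inl p))
  · fin_cases p
    · exact add_right_cancel (h1 ▸ h0)
    · exact h1

theorem bf33_stdVec (v : I33 → ℤ) :
    bf33 stdVec v = 2 * (v (.inl (0, 0)) + v (.inl (0, 1)) - 2 * v (.inr (.inr 0))) := by
  rw [bf33_eq]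
  simp [stdVec, uVec, w33, bfE8]
  ring

theorem exists_stdEmb_eq_iff (v : I33 → ℤ) : (∃ x, stdEmb x = v) ↔ bf33 stdVec v = 0 := by
  rw [bf33_stdVec]
  constructor
  · rintro ⟨x, rfl⟩
    simp [stdEmb]
    ring
  · intro hv
    refine ⟨fun
      | .inl (0, i) => v (.inl (1, i))
      | .inl (1, i) => v (.inl (2, i))
      | .inr (.inl p) => v (.inr (.inl p))
      | .inr (.inr 0) => v (.inl (0, 0)) - v (.inr (.inr 0))
      | .inr (.inr 1) => v (.inr (.inr 0)), ?_⟩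
    ext i
    rcases i with ⟨a, i⟩ | p | p
    · fin_cases a <;> fin_cases i <;> simp [stdEmb]
      linarith
    · rfl
    · rw [Subsingleton.elim p 0]
      rfl

/-- if `H ∈ L_{K3[3]}` is primitive with `H² = 4` and
`div(H, L_{K3[3]}) = 2`, then `H^⊥ ⊆ L_{K3[3]}` is isometric to
`Λ = U^{⊕2} ⊕ E₈^{⊕2} ⊕ [-2]^{⊕2}`. -/
theorem stmt_16 (H : I33 → ℤ)
    (hprim : ∀ (c : ℤ) (w : I33 → ℤ), H = c • w → IsUnit c)
    (hH2 : bf33 H H = 4)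
    (hdiv : (∀ y : I33 → ℤ, ∃ k : ℤ, bf33 H y = 2 * k) ∧
      ∃ y : I33 → ℤ, bf33 H y = 2) :
    ∃ φ : (JΛ → ℤ) →ₗ[ℤ] (I33 → ℤ), Function.Injective φ ∧
      (∀ x y, bf33 (φ x) (φ y) = bfΛ x y) ∧
      ∀ w : I33 → ℤ, (∃ x, φ x = w) ↔ bf33 H w = 0 := by
  obtain ⟨g, hg, hgH⟩ := sameOrbit_stdVec hprim hH2 hdiv.1 hdiv.2
  simp only [B33_apply] at hg
  refine ⟨g.symm.toLinearMap ∘ₗ stdEmb, g.symm.injective.comp stdEmb_injective, fun x y => ?_,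
    fun w => ?_⟩
  · rw [← bf33_stdEmb, ← hg]
    simp
  · rw [← hg, hgH, ← exists_stdEmb_eq_iff]
    simp [LinearEquiv.symm_apply_eq]
end
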